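/- Let x : Fin 4 → (Fin 4 → Fin 3) be defined by x a b = 1 if b = a and x a b = 0 otherwise, and let H = {x a : a ∈ Fin 4} be the corresponding four-card hand. Then every permutation of H is a symmetry of H: for every bijection σ : Fin 4 → Fin 4, there exist a permutation ψ of Fin 4 and a family θ : Fin 4 → Equiv.Perm (Fin 3) whose induced deck map sends x a to x (σ a) for every a. In particular, H has exactly 24 symmetries. -/

import Mathlib

/-- A card of the SET deck: four attributes, each with three values. -/
abbrev Card := Fin 4 → Fin 3

/-- The deck map induced by a permutation `ψ` of attributes and a family `θ` of value
permutations: it sends a card `x` to the card `y` with `y (ψ a) = θ a (x a)` for all `a`. -/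
def deckMap (ψ : Equiv.Perm (Fin 4)) (θ : Fin 4 → Equiv.Perm (Fin 3)) (x : Card) : Card :=
  fun b => θ (ψ.symm b) (x (ψ.symm b))

/-- The four cards `x a`, where `x a b = 1` if `b = a` and `x a b = 0` otherwise. -/
def x (a : Fin 4) : Card := fun b => if b = a then 1 else 0

/-- The four-card hand `{x a : a ∈ Fin 4}`. -/
def H : Finset Card := Finset.univ.image x

theorem x_injective : Function.Injective x := by
  intro a b h
  have := congrFun h a
  by_contra hab
  simp [x, hab] at this

theorem deckMap_x (σ : Equiv.Perm (Fin 4)) (a : Fin 4) :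
    deckMap σ (fun _ => 1) (x a) = x (σ a) := by
  funext b
  simp [deckMap, x, Equiv.symm_apply_eq]

theorem deckMap_injective (ψ : Equiv.Perm (Fin 4)) (θ : Fin 4 → Equiv.Perm (Fin 3)) :
    Function.Injective (deckMap ψ θ) := by
  intro c d h
  funext a
  have := congrFun h (ψ a)
  simpa [deckMap] using this

noncomputable def handEquiv : Fin 4 ≃ {c : Card // c ∈ H} :=
  Equiv.ofBijective (fun a => ⟨x a, by simp [H]⟩) ⟨fun a b h => x_injective (congrArg Subtype.val h), by
    rintro ⟨c, hc⟩
    obtain ⟨a, -, rfl⟩ := Finset.mem_image.1 hc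
    exact ⟨a, rfl⟩⟩

theorem handEquiv_coe (a : Fin 4) : (handEquiv a : Card) = x a := rfl

/-- Every permutation of the hand `H` is a symmetry of `H`: for every bijection `σ` of
`Fin 4`, some induced deck map sends `x a` to `x (σ a)` for every `a`.  In particular,
`H` has exactly 24 symmetries (permutations of `H` obtained by restricting induced
deck maps). -/
theorem all_permutations_are_symmetries :
    (∀ σ : Equiv.Perm (Fin 4),
      ∃ (ψ : Equiv.Perm (Fin 4)) (θ : Fin 4 → Equiv.Perm (Fin 3)),
        ∀ a : Fin 4, deckMap ψ θ (x a) = x (σ a)) ∧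
    Nat.card {g : {c : Card // c ∈ H} → {c : Card // c ∈ H} //
      ∃ (ψ : Equiv.Perm (Fin 4)) (θ : Fin 4 → Equiv.Perm (Fin 3)),
        ∀ z : {c : Card // c ∈ H}, (g z : Card) = deckMap ψ θ (z : Card)} = 24 := by
  refine ⟨fun σ => ⟨σ, fun _ => 1, deckMap_x σ⟩, ?_⟩
  have key : ∀ e : Equiv.Perm {c : Card // c ∈ H},
      ∃ (ψ : Equiv.Perm (Fin 4)) (θ : Fin 4 → Equiv.Perm (Fin 3)),
        ∀ z : {c : Card // c ∈ H}, (e z : Card) = deckMap ψ θ (z : Card) := by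
    intro e
    refine ⟨(handEquiv.trans e).trans handEquiv.symm, fun _ => 1, fun z => ?_⟩
    obtain ⟨a, rfl⟩ := handEquiv.surjective z
    rw [handEquiv_coe, deckMap_x, ← handEquiv_coe]
    simp
  rw [← Nat.card_congr (Equiv.ofBijective
    (fun e : Equiv.Perm {c : Card // c ∈ H} => (⟨e, key e⟩ :
      {g : {c : Card // c ∈ H} → {c : Card // c ∈ H} //
      ∃ (ψ : Equiv.Perm (Fin 4)) (θ : Fin 4 → Equiv.Perm (Fin 3)),
        ∀ z : {c : Card // c ∈ H}, (g z : Card) = deckMap ψ θ (z : Card)})) ⟨?_, ?_⟩),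
    ← Nat.card_congr (Equiv.permCongr handEquiv), Nat.card_perm, Nat.card_fin]
  · rfl
  · intro e f h
    exact DFunLike.coe_injective (congrArg Subtype.val h)
  · rintro ⟨g, ψ, θ, hg⟩
    have hi : Function.Injective g := by
      intro z w h
      apply Subtype.ext
      apply deckMap_injective ψ θ
      rw [← hg, ← hg, h]
    exact ⟨Equiv.ofBijective g (Finite.injective_iff_bijective.1 hi), rfl⟩
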